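/- Let ℓ ≥ 3 be an integer, ε > 0, and let p = p(n) be a function with p = ω(n^{-(ℓ-1)/ℓ}). Then asymptotically almost surely the random graph G(n,p) has the following property: for every choice of pairwise disjoint vertex sets V₁, …, V_ℓ each of size at least εn/ℓ, the number of cycles v₁ v₂ ⋯ v_ℓ in G(n,p) with v_i ∈ V_i for all 1 ≤ i ≤ ℓ is at least (1/2)·p^ℓ·∏_{i=1}^{ℓ} |V_i|. -/

import Mathlib

open Filter Finset SimpleGraph
open scoped Classical

/-- The probability, in the binomial random graph `G(n,p)`, of the event `A`. -/
noncomputable def erProb (n : ℕ) (p : ℝ) (A : SimpleGraph (Fin n) → Prop) : ℝ :=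
  ∑' G : SimpleGraph (Fin n),
    if A G then p ^ G.edgeSet.ncard * (1 - p) ^ (n.choose 2 - G.edgeSet.ncard) else 0

/-- The number of copies of the cycle `C_k` in `G` whose `i`-th vertex (in cyclic order)
lies in `V i`; counted as tuples `(v 0, …, v (k-1))` with `v i ∈ V i` and consecutive
vertices (cyclically) adjacent. -/
noncomputable def cyclesBetween {n : ℕ} (G : SimpleGraph (Fin n)) (k : ℕ)
    (V : Fin k → Finset (Fin n)) : ℕ :=
  (Finset.univ.filter fun v : Fin k → Fin n =>
    (∀ i, v i ∈ V i) ∧ ∀ i : Fin k, G.Adj (v i) (v (i + ⟨1 % k, Nat.mod_lt 1 i.pos⟩))).card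

/-!
Fix pairwise disjoint `V i` with at least `m` elements each, let `X` be the number of cycles with
`i`-th vertex in `V i`, and `μ = p ^ ℓ * ∏ |V i|` its mean. The edge sets of such cycles are subsets
of a random set, so the Harris inequality bounds the logarithmic derivative of the Laplace transform
of `X`, which gives Janson's inequality `ℙ(X ≤ c μ) ≤ exp (-(1 - c)² μ² / (2 Δ))`.

Pairs of cycles sharing the edges at a set `J` of places contribute at most
`μ² / (p ^ |J| * m ^ v(J))` to `Δ`, where `v(J)` is the number of endpoints of `J`. A proper
nonempty set of edges of a cycle has `v(J) ≥ |J| + 1`, so the denominator is at least `m * (p * m)`;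
for the full edge set it is `(p * m) ^ ℓ`. Both are at least `m * K` for any prescribed `K` once `p`
is a large multiple of `n ^ (-(ℓ - 1) / ℓ)`. Hence `Δ ≤ 2 ^ ℓ μ² / (m K)`, and the failure
probability `exp (-Ω(K n))` beats the at most `2 ^ (n ℓ)` choices of the sets `V i`.
-/

section RandomSubset

variable {E ι : Type*} [Fintype E] [DecidableEq E] {p : E → ℝ}

/-- The probability that a random subset of `E`, containing each `e` independently with
probability `p e`, equals `S`. -/
noncomputable def bernoulliWeight (p : E → ℝ) (S : Finset E) : ℝ :=
  ∏ e, if e ∈ S then p e else 1 - p e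

/-- The expectation over a random subset of `E` that contains each `e` independently with
probability `p e`, as a linear functional. -/
noncomputable def bernoulliExpect (p : E → ℝ) : (Finset E → ℝ) →ₗ[ℝ] ℝ :=
  ∑ S, bernoulliWeight p S • LinearMap.proj S

/-- The probability that a random subset of `E`, containing each `e` independently with
probability `p e`, has the property `Q`. -/
noncomputable def bernoulliProb (p : E → ℝ) (Q : Finset E → Prop) : ℝ :=
  bernoulliExpect p (Set.indicator {S | Q S} 1)

lemma bernoulliWeight_nonneg (hp : p ∈ Set.Icc 0 1) : 0 ≤ bernoulliWeight p := fun S ↦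
  prod_nonneg fun e _ ↦ by
    split_ifs
    exacts [hp.1 e, sub_nonneg.2 (hp.2 e)]

lemma bernoulliWeight_mul_bernoulliWeight (S T : Finset E) :
    bernoulliWeight p S * bernoulliWeight p T =
      bernoulliWeight p (S ⊓ T) * bernoulliWeight p (S ⊔ T) := by
  simp only [bernoulliWeight, ← prod_mul_distrib]
  refine prod_congr rfl fun e _ ↦ ?_
  by_cases hS : e ∈ S <;> by_cases hT : e ∈ T <;> simp [hS, hT, mul_comm]

lemma mul_bernoulliWeight_add_bernoulliWeight_insert {a : E} {S : Finset E} (ha : a ∉ S) :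
    p a * (bernoulliWeight p S + bernoulliWeight p (insert a S)) =
      bernoulliWeight p (insert a S) := by
  have hrest : ∏ e ∈ univ.erase a, (if e ∈ insert a S then p e else 1 - p e) =
      ∏ e ∈ univ.erase a, if e ∈ S then p e else 1 - p e :=
    prod_congr rfl fun e he ↦ by simp [ne_of_mem_erase he]
  simp only [bernoulliWeight, ← mul_prod_erase univ _ (mem_univ a), hrest, ha, if_false,
    mem_insert_self, if_true]
  ring

lemma bernoulliExpect_apply (p : E → ℝ) (f : Finset E → ℝ) :
    bernoulliExpect p f = ∑ S, bernoulliWeight p S * f S := by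
  simp [bernoulliExpect]

lemma bernoulliExpect_mono (hp : p ∈ Set.Icc 0 1) : Monotone (bernoulliExpect p) := by
  intro f g hfg
  simp only [bernoulliExpect_apply]
  exact sum_le_sum fun S _ ↦ mul_le_mul_of_nonneg_left (hfg S) (bernoulliWeight_nonneg hp S)

lemma bernoulliExpect_nonneg (hp : p ∈ Set.Icc 0 1) {f : Finset E → ℝ} (hf : 0 ≤ f) :
    0 ≤ bernoulliExpect p f := by
  simpa using bernoulliExpect_mono hp hf

lemma bernoulliExpect_one : bernoulliExpect p 1 = 1 :=
  calc bernoulliExpect p 1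
      = ∑ S, (∏ e ∈ S, p e) * ∏ e ∈ Sᶜ, (1 - p) e := by
        simp [bernoulliExpect_apply, bernoulliWeight, prod_ite,
          filter_notMem_eq_sdiff, ← compl_eq_univ_sdiff]
    _ = 1 := by rw [← Fintype.prod_add]; simp

lemma bernoulliExpect_ite_mem (a : E) (f : Finset E → ℝ) :
    bernoulliExpect p (fun S ↦ if a ∈ S then f S else 0) =
      p a * bernoulliExpect p fun S ↦ f (insert a S) := by
  have hsplit (g : Finset E → ℝ) :
      ∑ S, g S = ∑ S ∈ (univ.erase a).powerset, (g S + g (insert a S)) := by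
    rw [sum_add_distrib, ← sum_powerset_insert (notMem_erase a univ), insert_erase (mem_univ a),
      powerset_univ]
  simp only [bernoulliExpect_apply, hsplit, mul_sum]
  refine sum_congr rfl fun S hS ↦ ?_
  have ha : a ∉ S := fun h ↦ notMem_erase a univ (mem_powerset.1 hS h)
  simp only [ha, if_false, mul_zero, zero_add, mem_insert_self, if_true, insert_idem, ← add_mul,
    ← mul_assoc, mul_bernoulliWeight_add_bernoulliWeight_insert ha]

lemma bernoulliExpect_ite_subset (A : Finset E) (f : Finset E → ℝ) :
    bernoulliExpect p (fun S ↦ if A ⊆ S then f S else 0) =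
      (∏ e ∈ A, p e) * bernoulliExpect p fun S ↦ f (S ∪ A) := by
  induction A using Finset.induction_on generalizing f with
  | empty => simp
  | insert a A ha ih =>
    calc bernoulliExpect p (fun S ↦ if insert a A ⊆ S then f S else 0)
        = bernoulliExpect p (fun S ↦ if a ∈ S then if A ⊆ S then f S else 0 else 0) := by
          simp only [insert_subset_iff, ite_and]
      _ = p a * bernoulliExpect p (fun S ↦ if A ⊆ S then f (insert a S) else 0) := by
          simp only [bernoulliExpect_ite_mem, subset_insert_iff_of_notMem ha]
      _ = (∏ e ∈ insert a A, p e) * bernoulliExpect p fun S ↦ f (S ∪ insert a A) := by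
          simp only [ih, prod_insert ha, mul_assoc, union_insert]

lemma bernoulliProb_subset (A : Finset E) : bernoulliProb p (A ⊆ ·) = ∏ e ∈ A, p e := by
  have hind : Set.indicator {S | A ⊆ S} 1 = fun S ↦ if A ⊆ S then (1 : ℝ) else 0 := by
    ext S
    simp [Set.indicator]
  have hshift := bernoulliExpect_ite_subset (p := p) A 1
  simpa [bernoulliProb, hind, ← Pi.one_def, bernoulliExpect_one] using hshift

lemma bernoulliProb_eq_zero {Q : Finset E → Prop} (h : ∀ S, ¬ Q S) : bernoulliProb p Q = 0 := by
  rw [bernoulliProb, Set.eq_empty_of_forall_notMem (s := {S | Q S}) h, Set.indicator_empty']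
  exact map_zero _

lemma bernoulliProb_mono (hp : p ∈ Set.Icc 0 1) {Q R : Finset E → Prop}
    (h : ∀ S, Q S → R S) : bernoulliProb p Q ≤ bernoulliProb p R :=
  bernoulliExpect_mono hp (Set.indicator_le_indicator_of_subset h fun _ ↦ zero_le_one)

lemma bernoulliProb_le_one (hp : p ∈ Set.Icc 0 1) (Q : Finset E → Prop) :
    bernoulliProb p Q ≤ 1 :=
  (bernoulliExpect_mono hp (Set.indicator_le_self' fun _ _ ↦ zero_le_one)).trans_eq
    bernoulliExpect_one

lemma one_sub_card_mul_le_bernoulliProb_forall [Fintype ι] (hp : p ∈ Set.Icc 0 1)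
    {Q : ι → Finset E → Prop} {δ : ℝ} (hQ : ∀ i, bernoulliProb p (fun S ↦ ¬ Q i S) ≤ δ) :
    1 - Fintype.card ι * δ ≤ bernoulliProb p fun S ↦ ∀ i, Q i S := by
  have hcover : (1 : Finset E → ℝ) ≤
      Set.indicator {S | ∀ i, Q i S} 1 + ∑ i, Set.indicator {S | ¬ Q i S} 1 := by
    intro S
    have hnonneg (i : ι) : (0 : ℝ) ≤ Set.indicator {S | ¬ Q i S} 1 S :=
      Set.indicator_nonneg (fun _ _ ↦ zero_le_one) S
    rw [Pi.add_apply, Finset.sum_apply]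
    by_cases h : ∀ i, Q i S
    · simp [Set.indicator, h]
    · obtain ⟨i, hi⟩ := not_forall.1 h
      simpa [Set.indicator, h, hi] using single_le_sum (fun i _ ↦ hnonneg i) (mem_univ i)
  have hunion := bernoulliExpect_mono hp hcover
  rw [bernoulliExpect_one, map_add, map_sum] at hunion
  have hsum : ∑ i, bernoulliProb p (fun S ↦ ¬ Q i S) ≤ Fintype.card ι * δ := by
    simpa using sum_le_sum fun i (_ : i ∈ univ) ↦ hQ i
  simp only [bernoulliProb] at hsum ⊢
  linarith

lemma bernoulliExpect_mul_le_of_antitone (hp : p ∈ Set.Icc 0 1) {f g : Finset E → ℝ}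
    (hf₀ : 0 ≤ f) (hg₀ : 0 ≤ g) (hf : Antitone f) (hg : Antitone g) :
    bernoulliExpect p f * bernoulliExpect p g ≤ bernoulliExpect p (f * g) := by
  have hfkg := fkg (α := (Finset E)ᵒᵈ) (f ∘ OrderDual.ofDual) (g ∘ OrderDual.ofDual)
    (bernoulliWeight p ∘ OrderDual.ofDual) (fun S ↦ bernoulliWeight_nonneg hp _)
    (fun S ↦ hf₀ _) (fun S ↦ hg₀ _) hf.dual_left hg.dual_left fun S T ↦
      ((bernoulliWeight_mul_bernoulliWeight _ _).trans (mul_comm _ _)).le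
  have hone : ∑ S, bernoulliWeight p S = 1 := by
    simpa [bernoulliExpect_apply] using bernoulliExpect_one (p := p)
  change (∑ S, bernoulliWeight p S * f S) * ∑ S, bernoulliWeight p S * g S ≤
    (∑ S, bernoulliWeight p S) * ∑ S, bernoulliWeight p S * (f S * g S) at hfkg
  simpa only [bernoulliExpect_apply, Pi.mul_apply, hone, one_mul] using hfkg

end RandomSubset

section Janson

variable {E ι : Type*} [DecidableEq E] {p : E → ℝ} {I : Finset ι} {A : ι → Finset E} {s t : ℝ}

/-- The number of sets of the family `A i`, `i ∈ I`, that are contained in `S`. -/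
def subsetCount (I : Finset ι) (A : ι → Finset E) (S : Finset E) : ℝ :=
  #{i ∈ I | A i ⊆ S}

lemma subsetCount_eq_sum (I : Finset ι) (A : ι → Finset E) (S : Finset E) :
    subsetCount I A S = ∑ i ∈ I, if A i ⊆ S then 1 else 0 := by
  simp [subsetCount]

lemma subsetCount_mono : Monotone (subsetCount I A) := fun _ _ hST ↦
  Nat.cast_le.2 (card_le_card (monotone_filter_right I fun _ _ h ↦ h.trans hST))

lemma subsetCount_mono_left {J : Finset ι} (hJI : J ⊆ I) : subsetCount J A ≤ subsetCount I A :=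
  fun _ ↦ Nat.cast_le.2 (card_le_card (filter_subset_filter _ hJI))

lemma subsetCount_union (I : Finset ι) (A : ι → Finset E) (S B : Finset E) :
    subsetCount I A (S ∪ B) = subsetCount {i ∈ I | ¬ Disjoint B (A i)} A (S ∪ B) +
      subsetCount {i ∈ I | Disjoint B (A i)} A S := by
  have hdisj : subsetCount {i ∈ I | Disjoint B (A i)} A (S ∪ B) =
      subsetCount {i ∈ I | Disjoint B (A i)} A S := by
    simp only [subsetCount_eq_sum]
    refine sum_congr rfl fun i hi ↦ ?_
    have hiff : A i ⊆ S ∪ B ↔ A i ⊆ S :=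
      ⟨fun h ↦ (mem_filter.1 hi).2.symm.left_le_of_le_sup_right h,
        fun h ↦ h.trans subset_union_left⟩
    simp only [hiff]
  rw [← hdisj, subsetCount_eq_sum, subsetCount_eq_sum, subsetCount_eq_sum, add_comm,
    sum_filter_add_sum_filter_not]

lemma antitone_exp_neg_mul_subsetCount (hs : 0 ≤ s) :
    Antitone fun S ↦ Real.exp (-(s * subsetCount I A S)) := fun _ _ hST ↦
  Real.exp_le_exp.2 (neg_le_neg (mul_le_mul_of_nonneg_left (subsetCount_mono hST) hs))

variable [Fintype E]

lemma prod_mul_bernoulliExpect_subsetCount_union (B : Finset E) :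
    (∏ e ∈ B, p e) * bernoulliExpect p (fun S ↦ subsetCount I A (S ∪ B)) =
      ∑ i ∈ I, ∏ e ∈ B ∪ A i, p e := by
  rw [← bernoulliExpect_ite_subset]
  have hsum : (fun S ↦ if B ⊆ S then subsetCount I A S else 0) =
      ∑ i ∈ I, Set.indicator {S | B ∪ A i ⊆ S} 1 := by
    ext S
    by_cases hB : B ⊆ S <;> simp [Set.indicator, subsetCount_eq_sum, union_subset_iff, hB]
  simp only [hsum, map_sum, ← bernoulliProb_subset, bernoulliProb]

/-- The Laplace transform at `s` of the number of sets `A i`, `i ∈ I`, contained in a random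
subset of `E`. -/
noncomputable def countLaplace (p : E → ℝ) (I : Finset ι) (A : ι → Finset E) (s : ℝ) : ℝ :=
  bernoulliExpect p fun S ↦ Real.exp (-(s * subsetCount I A S))

/-- The parameter `Δ = ∑_{i, j : A i ∩ A j ≠ ∅} ℙ(A i ∪ A j ⊆ S)` of Janson's inequality, where
`(i, j)` runs over ordered pairs and `i = j` is allowed. -/
def jansonDelta (p : E → ℝ) (I : Finset ι) (A : ι → Finset E) : ℝ :=
  ∑ i ∈ I, ∑ j ∈ I with ¬ Disjoint (A i) (A j), ∏ e ∈ A i ∪ A j, p e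

lemma countLaplace_zero : countLaplace p I A 0 = 1 := by
  simp [countLaplace, ← Pi.one_def, bernoulliExpect_one]

lemma countLaplace_nonneg (hp : p ∈ Set.Icc 0 1) : 0 ≤ countLaplace p I A s :=
  bernoulliExpect_nonneg hp fun _ ↦ (Real.exp_pos _).le

lemma hasDerivAt_countLaplace (p : E → ℝ) (I : Finset ι) (A : ι → Finset E) (s : ℝ) :
    HasDerivAt (countLaplace p I A)
      (-bernoulliExpect p fun S ↦ subsetCount I A S * Real.exp (-(s * subsetCount I A S))) s := by
  have hterm (S : Finset E) : HasDerivAt (fun s ↦ bernoulliWeight p S *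
      Real.exp (-(s * subsetCount I A S)))
      (bernoulliWeight p S * (Real.exp (-(s * subsetCount I A S)) * -(1 * subsetCount I A S))) s :=
    ((hasDerivAt_id s).mul_const _).neg.exp.const_mul _
  have hsum := HasDerivAt.fun_sum fun S (_ : S ∈ univ) ↦ hterm S
  have hfun : countLaplace p I A =
      fun s ↦ ∑ S, bernoulliWeight p S * Real.exp (-(s * subsetCount I A S)) :=
    funext fun s ↦ bernoulliExpect_apply p _
  rw [hfun, bernoulliExpect_apply, ← sum_neg_distrib]
  exact hsum.congr_deriv (sum_congr rfl fun S _ ↦ by ring)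

/-- Given `B ⊆ S`, the sets meeting `B` and the sets disjoint from `B` contribute two antitone
factors to the exponential, which are decoupled by the Harris inequality; the first factor is
bounded below by linearization. -/
lemma sub_mul_countLaplace_le_bernoulliExpect_ite_subset (hp : p ∈ Set.Icc 0 1) (hs : 0 ≤ s)
    (B : Finset E) :
    (∏ e ∈ B, p e - s * ∑ j ∈ I with ¬ Disjoint B (A j), ∏ e ∈ B ∪ A j, p e) *
        countLaplace p I A s ≤
      bernoulliExpect p fun S ↦ if B ⊆ S then Real.exp (-(s * subsetCount I A S)) else 0 := by
  set N : Finset ι := {j ∈ I | ¬ Disjoint B (A j)}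
  set D : Finset ι := {j ∈ I | Disjoint B (A j)}
  set f : Finset E → ℝ := fun S ↦ Real.exp (-(s * subsetCount N A (S ∪ B)))
  set g : Finset E → ℝ := fun S ↦ Real.exp (-(s * subsetCount D A S))
  have hB : 0 ≤ ∏ e ∈ B, p e := prod_nonneg fun e _ ↦ hp.1 e
  have hf : Antitone f := fun S T hST ↦
    antitone_exp_neg_mul_subsetCount hs (union_subset_union_left hST)
  have hlinear : 1 - s * bernoulliExpect p (fun S ↦ subsetCount N A (S ∪ B)) ≤
      bernoulliExpect p f := by
    rw [← bernoulliExpect_one (p := p), ← smul_eq_mul, ← map_smul, ← map_sub]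
    exact bernoulliExpect_mono hp fun S ↦ Real.one_sub_le_exp_neg _
  have hfew : countLaplace p I A s ≤ bernoulliExpect p g :=
    bernoulliExpect_mono hp fun S ↦ Real.exp_le_exp.2 <| neg_le_neg <|
      mul_le_mul_of_nonneg_left (subsetCount_mono_left (filter_subset _ I) S) hs
  calc _ = (∏ e ∈ B, p e) * ((1 - s * bernoulliExpect p (fun S ↦ subsetCount N A (S ∪ B))) *
        countLaplace p I A s) := by
        rw [← prod_mul_bernoulliExpect_subsetCount_union]
        ring
    _ ≤ (∏ e ∈ B, p e) * (bernoulliExpect p f * bernoulliExpect p g) :=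
        mul_le_mul_of_nonneg_left (mul_le_mul hlinear hfew (countLaplace_nonneg hp)
          (bernoulliExpect_nonneg hp fun _ ↦ (Real.exp_pos _).le)) hB
    _ ≤ (∏ e ∈ B, p e) * bernoulliExpect p (f * g) :=
        mul_le_mul_of_nonneg_left (bernoulliExpect_mul_le_of_antitone hp
          (fun _ ↦ (Real.exp_pos _).le) (fun _ ↦ (Real.exp_pos _).le) hf
          (antitone_exp_neg_mul_subsetCount hs)) hB
    _ = _ := by
        rw [bernoulliExpect_ite_subset]
        congr 2
        ext S
        rw [subsetCount_union, mul_add, neg_add, Real.exp_add]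
        rfl

lemma sub_mul_countLaplace_le (hp : p ∈ Set.Icc 0 1) (hs : 0 ≤ s) :
    (∑ i ∈ I, ∏ e ∈ A i, p e - s * jansonDelta p I A) * countLaplace p I A s ≤
      bernoulliExpect p fun S ↦ subsetCount I A S * Real.exp (-(s * subsetCount I A S)) := by
  have hsum : (fun S ↦ subsetCount I A S * Real.exp (-(s * subsetCount I A S))) =
      ∑ i ∈ I, fun S ↦ if A i ⊆ S then Real.exp (-(s * subsetCount I A S)) else 0 := by
    ext S
    rw [Finset.sum_apply]
    generalize Real.exp (-(s * subsetCount I A S)) = x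
    simp only [subsetCount_eq_sum, sum_mul, ite_mul, one_mul, zero_mul]
  rw [hsum, map_sum, jansonDelta, mul_sum, ← sum_sub_distrib, sum_mul]
  exact sum_le_sum fun i _ ↦ sub_mul_countLaplace_le_bernoulliExpect_ite_subset hp hs (A i)

lemma countLaplace_le_exp (hp : p ∈ Set.Icc 0 1) (hs : 0 ≤ s) :
    countLaplace p I A s ≤
      Real.exp (-(s * ∑ i ∈ I, ∏ e ∈ A i, p e) + s ^ 2 * jansonDelta p I A / 2) := by
  set μ := ∑ i ∈ I, ∏ e ∈ A i, p e
  set Δ := jansonDelta p I A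
  set X := subsetCount I A
  have hderiv (t : ℝ) : HasDerivAt (fun t ↦ countLaplace p I A t *
      Real.exp (t * μ - t ^ 2 * Δ / 2))
      (-(bernoulliExpect p fun S ↦ X S * Real.exp (-(t * X S))) *
        Real.exp (t * μ - t ^ 2 * Δ / 2) + countLaplace p I A t *
        (Real.exp (t * μ - t ^ 2 * Δ / 2) * (1 * μ - (2 : ℕ) * t ^ (2 - 1) * Δ / 2))) t :=
    (hasDerivAt_countLaplace p I A t).mul ((((hasDerivAt_id t).mul_const μ).sub
      (((hasDerivAt_pow 2 t).mul_const Δ).div_const 2)).exp)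
  have hanti : AntitoneOn (fun t ↦ countLaplace p I A t * Real.exp (t * μ - t ^ 2 * Δ / 2))
      (Set.Ici 0) := by
    refine antitoneOn_of_deriv_nonpos (convex_Ici 0)
      (fun t _ ↦ (hderiv t).continuousAt.continuousWithinAt)
      (fun t _ ↦ (hderiv t).differentiableAt.differentiableWithinAt) fun t ht ↦ ?_
    rw [interior_Ici] at ht
    have hnonpos := mul_nonpos_of_nonneg_of_nonpos
      (Real.exp_pos (t * μ - t ^ 2 * Δ / 2)).le
      (sub_nonpos.2 (sub_mul_countLaplace_le (I := I) (A := A) hp (le_of_lt ht)))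
    rw [(hderiv t).deriv]
    refine (Eq.le ?_).trans hnonpos
    simp only [X, μ, Δ]
    push_cast
    ring
  have hle := hanti Set.self_mem_Ici hs hs
  simp only [countLaplace_zero, zero_mul, ne_eq, OfNat.ofNat_ne_zero, not_false_eq_true, zero_pow,
    zero_div, sub_zero, Real.exp_zero, mul_one] at hle
  rwa [← le_div_iff₀ (Real.exp_pos _), one_div, ← Real.exp_neg, neg_sub', neg_mul_eq_mul_neg,
    sub_neg_eq_add, ← neg_mul_eq_mul_neg] at hle

theorem bernoulliProb_subsetCount_le_le_exp (hp : p ∈ Set.Icc 0 1) {D : ℝ}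
    (hD : jansonDelta p I A ≤ D) (hD₀ : 0 ≤ D) (ht : 0 ≤ t) :
    bernoulliProb p (fun S ↦ subsetCount I A S ≤ ∑ i ∈ I, ∏ e ∈ A i, p e - t) ≤
      Real.exp (-(t ^ 2 / (2 * D))) := by
  set μ := ∑ i ∈ I, ∏ e ∈ A i, p e
  have hs : 0 ≤ t / D := div_nonneg ht hD₀
  have hmarkov : Set.indicator {S | subsetCount I A S ≤ μ - t} 1 ≤
      Real.exp (t / D * (μ - t)) • fun S ↦ Real.exp (-(t / D * subsetCount I A S)) := by
    refine Set.indicator_le' (fun S hS ↦ ?_) fun S _ ↦ ?_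
    · rw [Pi.smul_apply, smul_eq_mul, ← Real.exp_add, Pi.one_apply, Real.one_le_exp_iff,
        ← sub_eq_add_neg, sub_nonneg]
      exact mul_le_mul_of_nonneg_left hS hs
    · exact smul_nonneg (Real.exp_pos _).le (Real.exp_pos _).le
  calc bernoulliProb p (fun S ↦ subsetCount I A S ≤ μ - t)
      ≤ Real.exp (t / D * (μ - t)) * countLaplace p I A (t / D) :=
        (bernoulliExpect_mono hp hmarkov).trans_eq (map_smul _ _ _)
    _ ≤ Real.exp (t / D * (μ - t)) * Real.exp (-(t / D * μ) + (t / D) ^ 2 * D / 2) := by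
        gcongr
        refine (countLaplace_le_exp hp hs).trans ?_
        gcongr
    _ = Real.exp (-(t ^ 2 / (2 * D))) := by
        rw [← Real.exp_add]
        congr 1
        rcases hD₀.eq_or_lt with rfl | hD₀
        · simp
        · field_simp
          ring

end Janson

section BinomialRandomGraph

variable {α : Type*} [DecidableEq α] {p : ℝ}

/-- The probability that the pair `e` is an edge of the binomial random graph. All of `Sym2 α`
serves as the ground set, with probability `0` on the diagonal. -/
def edgeProb (p : ℝ) (e : Sym2 α) : ℝ := if e.IsDiag then 0 else p

lemma edgeProb_mem_Icc (hp : p ∈ Set.Icc 0 1) : (edgeProb p : Sym2 α → ℝ) ∈ Set.Icc 0 1 := by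
  constructor <;> intro e <;> dsimp [edgeProb] <;> split_ifs
  exacts [le_rfl, hp.1, zero_le_one, hp.2]

lemma prod_edgeProb_eq_pow {S : Finset (Sym2 α)} (hS : ∀ e ∈ S, ¬ e.IsDiag) :
    ∏ e ∈ S, edgeProb p e = p ^ #S :=
  prod_eq_pow_card fun e he ↦ if_neg (hS e he)

variable [Fintype α]

lemma bernoulliWeight_edgeProb {S : Finset (Sym2 α)} (hS : ∀ e ∈ S, ¬ e.IsDiag) :
    bernoulliWeight (edgeProb p) S = p ^ #S * (1 - p) ^ ((Fintype.card α).choose 2 - #S) := by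
  have hcard : #{e ∈ Sᶜ | ¬ e.IsDiag} = (Fintype.card α).choose 2 - #S := by
    rw [← Sym2.card_subtype_not_diag, Fintype.card_subtype,
      ← card_sdiff_of_subset fun e he ↦ mem_filter.2 ⟨mem_univ e, hS e he⟩]
    congr 1
    ext e
    simp [and_comm]
  have hcompl : ∏ e ∈ Sᶜ, (1 - edgeProb p e) = (1 - p) ^ ((Fintype.card α).choose 2 - #S) := by
    have hite (e : Sym2 α) : 1 - edgeProb p e = if e.IsDiag then 1 else 1 - p := by
      unfold edgeProb
      split_ifs <;> simp
    simp only [hite]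
    rw [prod_ite, prod_const_one, one_mul, prod_const, hcard]
  rw [← prod_edgeProb_eq_pow hS, ← hcompl]
  simp [bernoulliWeight, prod_ite, filter_notMem_eq_sdiff, ← compl_eq_univ_sdiff]

lemma bernoulliWeight_edgeProb_eq_zero {S : Finset (Sym2 α)} {e : Sym2 α}
    (he : e ∈ S) (hdiag : e.IsDiag) : bernoulliWeight (edgeProb p) S = 0 :=
  prod_eq_zero (mem_univ e) (by simp [he, edgeProb, hdiag])

theorem erProb_eq_bernoulliProb (n : ℕ) (p : ℝ) (Q : SimpleGraph (Fin n) → Prop) :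
    erProb n p Q =
      bernoulliProb (edgeProb p) fun S : Finset (Sym2 (Fin n)) ↦ Q (fromEdgeSet ↑S) := by
  rw [erProb, tsum_fintype, bernoulliProb, bernoulliExpect_apply]
  refine sum_of_injOn (fun G ↦ G.edgeFinset) (fun G _ H _ ↦ edgeFinset_inj.1) (by simp)
    (fun S _ hS ↦ ?_) fun G _ ↦ ?_
  · by_cases hdiag : ∃ e ∈ S, e.IsDiag
    · obtain ⟨e, he, hdiag⟩ := hdiag
      rw [bernoulliWeight_edgeProb_eq_zero he hdiag, zero_mul]
    · push Not at hdiag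
      refine absurd ⟨fromEdgeSet (S : Set (Sym2 (Fin n))), by simp, ?_⟩ hS
      ext e
      simpa using hdiag e
  · have hnot : ∀ e ∈ G.edgeFinset, ¬ e.IsDiag := fun _ ↦ G.not_isDiag_of_mem_edgeFinset
    have hcard : G.edgeSet.ncard = #G.edgeFinset := by
      rw [← coe_edgeFinset, Set.ncard_coe_finset]
    simp [bernoulliWeight_edgeProb hnot, Set.indicator, hcard]

end BinomialRandomGraph

section TransversalCopies

variable {α ι : Type*} [Fintype ι] [DecidableEq ι] {H : SimpleGraph ι} {V : ι → Finset α}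
  {u v : ι → α} {p m : ℝ}

/-- The copies of `H` in `G` whose vertex `i` lies in `V i`, as maps from the vertices of `H`. -/
noncomputable def transversalCopies (G : SimpleGraph α) (H : SimpleGraph ι) (V : ι → Finset α) :
    Finset (ι → α) :=
  {v ∈ Fintype.piFinset V | ∀ i j, H.Adj i j → G.Adj (v i) (v j)}

lemma eq_of_apply_eq_of_mem_piFinset (hV : Pairwise (Function.onFun Disjoint V))
    (hv : v ∈ Fintype.piFinset V) (hu : u ∈ Fintype.piFinset V) {i j : ι} (h : v i = u j) :
    i = j := by
  by_contra hij
  exact disjoint_left.1 (hV hij) (Fintype.mem_piFinset.1 hv i)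
    (h ▸ Fintype.mem_piFinset.1 hu j)

lemma eq_and_forall_eq_of_sym2Map_eq (hV : Pairwise (Function.onFun Disjoint V))
    (hv : v ∈ Fintype.piFinset V) (hu : u ∈ Fintype.piFinset V) {e e' : Sym2 ι}
    (h : Sym2.map v e = Sym2.map u e') : e = e' ∧ ∀ i ∈ e, v i = u i := by
  have hforth (i : ι) (hi : i ∈ e) : i ∈ e' ∧ v i = u i := by
    obtain ⟨j, hj, hji⟩ := Sym2.mem_map.1 (h ▸ Sym2.mem_map.2 ⟨i, hi, rfl⟩ : v i ∈ Sym2.map u e')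
    obtain rfl := eq_of_apply_eq_of_mem_piFinset hV hu hv hji
    exact ⟨hj, hji.symm⟩
  have hback (i : ι) (hi : i ∈ e') : i ∈ e := by
    obtain ⟨j, hj, hji⟩ := Sym2.mem_map.1 (h ▸ Sym2.mem_map.2 ⟨i, hi, rfl⟩ : u i ∈ Sym2.map v e)
    exact eq_of_apply_eq_of_mem_piFinset hV hv hu hji ▸ hj
  exact ⟨Sym2.ext fun i ↦ ⟨fun hi ↦ (hforth i hi).1, hback i⟩, fun i hi ↦ (hforth i hi).2⟩

lemma sym2Map_injective_of_mem_piFinset (hV : Pairwise (Function.onFun Disjoint V))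
    (hv : v ∈ Fintype.piFinset V) : Function.Injective (Sym2.map v) :=
  fun _ _ h ↦ (eq_and_forall_eq_of_sym2Map_eq hV hv hv h).1

variable [DecidableEq α] [Fintype H.edgeSet]

/-- The edge set of the copy of `H` placed by `v`. -/
def copyEdges (H : SimpleGraph ι) [Fintype H.edgeSet] (v : ι → α) : Finset (Sym2 α) :=
  H.edgeFinset.image (Sym2.map v)

/-- The edges of `H` that are placed identically by `v` and `u`. -/
noncomputable def agreeEdges (H : SimpleGraph ι) [Fintype H.edgeSet] (v u : ι → α) :
    Finset (Sym2 ι) :=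
  {e ∈ H.edgeFinset | ∀ i ∈ e, v i = u i}

/-- The set of endpoints of a set of edges. -/
def edgeSupport (J : Finset (Sym2 ι)) : Finset ι := J.biUnion Sym2.toFinset

lemma not_isDiag_of_mem_copyEdges (hV : Pairwise (Function.onFun Disjoint V))
    (hv : v ∈ Fintype.piFinset V) {e : Sym2 α} (he : e ∈ copyEdges H v) : ¬ e.IsDiag := by
  obtain ⟨f, hf, rfl⟩ := mem_image.1 he
  rw [Sym2.isDiag_map fun _ _ h ↦ eq_of_apply_eq_of_mem_piFinset hV hv hv h]
  exact H.not_isDiag_of_mem_edgeFinset hf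

lemma card_copyEdges (hV : Pairwise (Function.onFun Disjoint V)) (hv : v ∈ Fintype.piFinset V) :
    #(copyEdges H v) = #H.edgeFinset :=
  card_image_of_injective _ (sym2Map_injective_of_mem_piFinset hV hv)

lemma copyEdges_inter_copyEdges (hV : Pairwise (Function.onFun Disjoint V))
    (hv : v ∈ Fintype.piFinset V) (hu : u ∈ Fintype.piFinset V) :
    copyEdges H v ∩ copyEdges H u = (agreeEdges H v u).image (Sym2.map v) := by
  ext e
  simp only [copyEdges, agreeEdges, mem_inter, mem_image, mem_filter]
  constructor
  · rintro ⟨⟨f, hf, rfl⟩, g, -, hgf⟩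
    exact ⟨f, ⟨hf, (eq_and_forall_eq_of_sym2Map_eq hV hv hu hgf.symm).2⟩, rfl⟩
  · rintro ⟨f, ⟨hf, hagree⟩, rfl⟩
    exact ⟨⟨f, hf, rfl⟩, f, hf, Sym2.map_congr fun i hi ↦ (hagree i hi).symm⟩

lemma prod_edgeProb_copyEdges_union (hV : Pairwise (Function.onFun Disjoint V))
    (hv : v ∈ Fintype.piFinset V) (hu : u ∈ Fintype.piFinset V) :
    ∏ e ∈ copyEdges H v ∪ copyEdges H u, edgeProb p e =
      p ^ (2 * #H.edgeFinset - #(agreeEdges H v u)) := by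
  rw [prod_edgeProb_eq_pow fun e he ↦ (mem_union.1 he).elim
    (not_isDiag_of_mem_copyEdges hV hv) (not_isDiag_of_mem_copyEdges hV hu), card_union,
    card_copyEdges hV hv, card_copyEdges hV hu, copyEdges_inter_copyEdges hV hv hu,
    card_image_of_injective _ (sym2Map_injective_of_mem_piFinset hV hv), two_mul]

lemma not_disjoint_copyEdges_iff (hV : Pairwise (Function.onFun Disjoint V))
    (hv : v ∈ Fintype.piFinset V) (hu : u ∈ Fintype.piFinset V) :
    ¬ Disjoint (copyEdges H v) (copyEdges H u) ↔ (agreeEdges H v u).Nonempty := by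
  rw [not_disjoint_iff_nonempty_inter, copyEdges_inter_copyEdges hV hv hu, image_nonempty]

lemma card_filter_forall_eq_mul_pow_le (hm : 0 ≤ m) (hVm : ∀ i, m ≤ #(V i))
    (hv : v ∈ Fintype.piFinset V) (T : Finset ι) :
    (#{u ∈ Fintype.piFinset V | ∀ i ∈ T, v i = u i} : ℝ) * m ^ #T ≤ ∏ i, (#(V i) : ℝ) := by
  have hpi : {u ∈ Fintype.piFinset V | ∀ i ∈ T, v i = u i} =
      Fintype.piFinset fun i ↦ if i ∈ T then {v i} else V i := by
    ext u
    simp only [mem_filter, Fintype.mem_piFinset, ← forall_and]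
    refine forall_congr' fun i ↦ ?_
    by_cases hi : i ∈ T
    · simpa [hi, eq_comm] using fun h ↦ h ▸ Fintype.mem_piFinset.1 hv i
    · simp [hi]
  have hcard (i : ι) :
      (#(if i ∈ T then {v i} else V i) : ℝ) * (if i ∈ T then m else 1) ≤ #(V i) := by
    split_ifs <;> simp [hVm]
  calc (#{u ∈ Fintype.piFinset V | ∀ i ∈ T, v i = u i} : ℝ) * m ^ #T
      = ∏ i, (#(if i ∈ T then {v i} else V i) : ℝ) * (if i ∈ T then m else 1) := by
        rw [hpi, Fintype.card_piFinset, Nat.cast_prod, prod_mul_distrib, prod_ite_mem, univ_inter,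
          prod_const]
    _ ≤ ∏ i, (#(V i) : ℝ) := prod_le_prod (fun i _ ↦ by positivity) fun i _ ↦ hcard i

lemma mul_pow_mul_card_filter_agreeEdges_le (hp : 0 ≤ p) (hm : 0 ≤ m) (hVm : ∀ i, m ≤ #(V i))
    (hv : v ∈ Fintype.piFinset V) {J : Finset (Sym2 ι)} (hJ : J ⊆ H.edgeFinset) {Φ : ℝ}
    (hΦ : Φ ≤ p ^ #J * m ^ #(edgeSupport J)) :
    Φ * (p ^ (2 * #H.edgeFinset - #J) * #{u ∈ Fintype.piFinset V | agreeEdges H v u = J}) ≤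
      p ^ (2 * #H.edgeFinset) * ∏ i, (#(V i) : ℝ) := by
  set k := #H.edgeFinset
  set N : Finset (ι → α) := {u ∈ Fintype.piFinset V | ∀ i ∈ edgeSupport J, v i = u i}
  have hsub : {u ∈ Fintype.piFinset V | agreeEdges H v u = J} ⊆ N := by
    refine monotone_filter_right _ fun u _ (hu : agreeEdges H v u = J) i hi ↦ ?_
    obtain ⟨e, he, hie⟩ := mem_biUnion.1 hi
    rw [← hu] at he
    exact (mem_filter.1 he).2 i (Sym2.mem_toFinset.1 hie)
  have hle : #J ≤ 2 * k := (card_le_card hJ).trans (Nat.le_mul_of_pos_left _ two_pos)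
  calc Φ * (p ^ (2 * k - #J) * #{u ∈ Fintype.piFinset V | agreeEdges H v u = J})
      ≤ p ^ #J * m ^ #(edgeSupport J) * (p ^ (2 * k - #J) * #N) := by gcongr
    _ = p ^ (2 * k) * (#N * m ^ #(edgeSupport J)) := by
        rw [← Nat.add_sub_of_le hle, pow_add, Nat.add_sub_of_le hle]
        ring
    _ ≤ p ^ (2 * k) * ∏ i, (#(V i) : ℝ) := by
        gcongr
        exact card_filter_forall_eq_mul_pow_le hm hVm hv _

lemma mul_sum_prod_edgeProb_union_le (hV : Pairwise (Function.onFun Disjoint V)) (hp : 0 ≤ p)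
    (hm : 0 ≤ m) (hVm : ∀ i, m ≤ #(V i)) (hv : v ∈ Fintype.piFinset V) {Φ : ℝ}
    (hΦ : ∀ J ⊆ H.edgeFinset, J.Nonempty → Φ ≤ p ^ #J * m ^ #(edgeSupport J)) :
    Φ * ∑ u ∈ Fintype.piFinset V with ¬ Disjoint (copyEdges H v) (copyEdges H u),
        ∏ e ∈ copyEdges H v ∪ copyEdges H u, edgeProb p e ≤
      2 ^ #H.edgeFinset * (p ^ (2 * #H.edgeFinset) * ∏ i, (#(V i) : ℝ)) := by
  set k := #H.edgeFinset
  set F : Finset (Finset (Sym2 ι)) := {J ∈ H.edgeFinset.powerset | J.Nonempty}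
  have hmaps : ∀ u ∈ {u ∈ Fintype.piFinset V | (agreeEdges H v u).Nonempty},
      agreeEdges H v u ∈ F := fun u hu ↦
    mem_filter.2 ⟨mem_powerset.2 (filter_subset _ _), (mem_filter.1 hu).2⟩
  have hfiber : ∀ J ∈ F, ∑ u ∈ {u ∈ Fintype.piFinset V | (agreeEdges H v u).Nonempty} with
      agreeEdges H v u = J, p ^ (2 * k - #(agreeEdges H v u)) =
      p ^ (2 * k - #J) * #{u ∈ Fintype.piFinset V | agreeEdges H v u = J} := by
    intro J hJ
    rw [filter_filter, filter_congr fun u _ ↦ and_iff_right_of_imp fun h ↦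
      h ▸ (mem_filter.1 hJ).2, sum_congr rfl fun u hu ↦ by rw [(mem_filter.1 hu).2], sum_const,
      nsmul_eq_mul, mul_comm]
  calc Φ * ∑ u ∈ Fintype.piFinset V with ¬ Disjoint (copyEdges H v) (copyEdges H u),
        ∏ e ∈ copyEdges H v ∪ copyEdges H u, edgeProb p e
      = Φ * ∑ u ∈ Fintype.piFinset V with (agreeEdges H v u).Nonempty,
          p ^ (2 * k - #(agreeEdges H v u)) := by
        rw [filter_congr fun u hu ↦ not_disjoint_copyEdges_iff hV hv hu]
        exact congrArg _ (sum_congr rfl fun u hu ↦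
          prod_edgeProb_copyEdges_union hV hv (mem_filter.1 hu).1)
    _ = ∑ J ∈ F, Φ * (p ^ (2 * k - #J) *
          #{u ∈ Fintype.piFinset V | agreeEdges H v u = J}) := by
        rw [← sum_fiberwise_of_maps_to hmaps, mul_sum]
        exact sum_congr rfl fun J hJ ↦ congrArg _ (hfiber J hJ)
    _ ≤ #F • (p ^ (2 * k) * ∏ i, (#(V i) : ℝ)) := by
        refine sum_le_card_nsmul _ _ _ fun J hJ ↦ ?_
        obtain ⟨hJ, hne⟩ := mem_filter.1 hJ
        exact mul_pow_mul_card_filter_agreeEdges_le hp hm hVm hv (mem_powerset.1 hJ)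
          (hΦ J (mem_powerset.1 hJ) hne)
    _ ≤ 2 ^ k * (p ^ (2 * k) * ∏ i, (#(V i) : ℝ)) := by
        have hF : #F ≤ 2 ^ k := (card_filter_le _ _).trans_eq (card_powerset _)
        rw [nsmul_eq_mul]
        exact mul_le_mul_of_nonneg_right (by exact_mod_cast hF)
          (mul_nonneg (pow_nonneg hp _) (prod_nonneg fun _ _ ↦ Nat.cast_nonneg _))

lemma mul_jansonDelta_copyEdges_le (hV : Pairwise (Function.onFun Disjoint V)) (hp : 0 ≤ p)
    (hm : 0 ≤ m) (hVm : ∀ i, m ≤ #(V i)) {Φ : ℝ}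
    (hΦ : ∀ J ⊆ H.edgeFinset, J.Nonempty → Φ ≤ p ^ #J * m ^ #(edgeSupport J)) :
    Φ * jansonDelta (edgeProb p) (Fintype.piFinset V) (copyEdges H) ≤
      2 ^ #H.edgeFinset * (p ^ #H.edgeFinset * ∏ i, (#(V i) : ℝ)) ^ 2 := by
  rw [jansonDelta, mul_sum]
  refine (sum_le_card_nsmul _ _ _ fun v hv ↦
    mul_sum_prod_edgeProb_union_le hV hp hm hVm hv hΦ).trans_eq ?_
  rw [Fintype.card_piFinset, nsmul_eq_mul, Nat.cast_prod]
  ring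

lemma transversalCopies_fromEdgeSet (hV : Pairwise (Function.onFun Disjoint V))
    (S : Finset (Sym2 α)) :
    transversalCopies (fromEdgeSet ↑S) H V =
      {v ∈ Fintype.piFinset V | copyEdges H v ⊆ S} := by
  ext v
  simp only [transversalCopies, mem_filter]
  refine and_congr_right fun hv ↦ ?_
  have hne {i j : ι} (hij : H.Adj i j) : v i ≠ v j := fun h ↦
    hij.ne (eq_of_apply_eq_of_mem_piFinset hV hv hv h)
  simp only [copyEdges, image_subset_iff, Sym2.forall, mem_edgeFinset, mem_edgeSet,
    Sym2.map_mk, fromEdgeSet_adj, mem_coe]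
  exact forall₂_congr fun i j ↦ ⟨fun h hij ↦ (h hij).1, fun h hij ↦ ⟨h hij, hne hij⟩⟩

lemma sum_prod_edgeProb_copyEdges (hV : Pairwise (Function.onFun Disjoint V)) :
    ∑ v ∈ Fintype.piFinset V, ∏ e ∈ copyEdges H v, edgeProb p e =
      p ^ #H.edgeFinset * ∏ i, (#(V i) : ℝ) := by
  rw [sum_congr rfl fun v hv ↦ by rw [prod_edgeProb_eq_pow fun e he ↦
    not_isDiag_of_mem_copyEdges hV hv he, card_copyEdges hV hv], sum_const, Fintype.card_piFinset,
    nsmul_eq_mul, Nat.cast_prod, mul_comm]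

theorem bernoulliProb_card_transversalCopies_lt_le_exp [Fintype α]
    (hV : Pairwise (Function.onFun Disjoint V)) (hp₀ : 0 < p) (hp₁ : p ≤ 1) (hm : 0 < m)
    (hVm : ∀ i, m ≤ #(V i)) {Φ : ℝ} (hΦ₀ : 0 < Φ)
    (hΦ : ∀ J ⊆ H.edgeFinset, J.Nonempty → Φ ≤ p ^ #J * m ^ #(edgeSupport J)) {c : ℝ}
    (hc : c < 1) :
    bernoulliProb (edgeProb p) (fun S : Finset (Sym2 α) ↦
        #(transversalCopies (fromEdgeSet ↑S) H V) <
          c * p ^ #H.edgeFinset * ∏ i, (#(V i) : ℝ)) ≤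
      Real.exp (-((1 - c) ^ 2 * Φ / 2 ^ (#H.edgeFinset + 1))) := by
  set μ := p ^ #H.edgeFinset * ∏ i, (#(V i) : ℝ) with hμ
  have hμ₀ : 0 < μ := mul_pos (pow_pos hp₀ _) (prod_pos fun i _ ↦ hm.trans_le (hVm i))
  have hprob := edgeProb_mem_Icc (α := α) ⟨hp₀.le, hp₁⟩
  have hΔ : jansonDelta (edgeProb p) (Fintype.piFinset V) (copyEdges H) ≤
      2 ^ #H.edgeFinset * μ ^ 2 / Φ := by
    rw [le_div_iff₀' hΦ₀]
    exact mul_jansonDelta_copyEdges_le hV hp₀.le hm.le hVm hΦ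
  have hjanson := bernoulliProb_subsetCount_le_le_exp hprob hΔ
    (div_nonneg (mul_nonneg (pow_nonneg zero_le_two _) (sq_nonneg μ)) hΦ₀.le)
    (mul_nonneg (sub_nonneg.2 hc.le) hμ₀.le)
  rw [sum_prod_edgeProb_copyEdges hV] at hjanson
  refine (bernoulliProb_mono hprob fun S hS ↦ ?_).trans (hjanson.trans_eq ?_)
  · rw [transversalCopies_fromEdgeSet hV, mul_assoc, ← hμ] at hS
    refine (le_of_lt hS).trans_eq ?_
    ring
  · congr 2
    field_simp
    ring

end TransversalCopies

section Cycles

variable {k : ℕ} {J : Finset (Sym2 (Fin (k + 3)))}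

open Fin.CommRing in
lemma eq_univ_of_forall_add_one_mem {I : Finset (Fin (k + 1))} (hI : I.Nonempty)
    (h : ∀ i ∈ I, i + 1 ∈ I) : I = univ := by
  obtain ⟨i, hi⟩ := hI
  have hadd (t : ℕ) : i + (t : Fin (k + 1)) ∈ I := by
    induction t with
    | zero => simpa using hi
    | succ t ih => simpa [add_assoc] using h _ ih
  refine eq_univ_of_forall fun j ↦ ?_
  simpa using hadd (j - i).val

lemma sym2_self_add_one_injective :
    Function.Injective fun i : Fin (k + 3) ↦ s(i, i + 1) := by
  intro i j h
  rcases Sym2.eq_iff.1 h with ⟨hij, -⟩ | ⟨hij, hji⟩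
  · exact hij
  · have htwo : (1 + 1 : Fin (k + 3)) = 0 := by
      rwa [hij, add_assoc, add_eq_left] at hji
    exact absurd htwo (by
      rw [Fin.ext_iff, Fin.val_add, Nat.mod_eq_of_lt] <;> simp)

lemma edgeFinset_cycleGraph :
    (cycleGraph (k + 3)).edgeFinset = univ.image fun i ↦ s(i, i + 1) := by
  ext e
  induction e with | _ i j
  simp only [mem_edgeFinset, mem_edgeSet, cycleGraph_adj, mem_image, mem_univ, true_and,
    Sym2.eq_iff, sub_eq_iff_eq_add']
  constructor
  · rintro (rfl | rfl)
    exacts [⟨j, .inr ⟨rfl, rfl⟩⟩, ⟨i, .inl ⟨rfl, rfl⟩⟩]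
  · rintro ⟨a, ⟨rfl, rfl⟩ | ⟨rfl, rfl⟩⟩
    exacts [.inr rfl, .inl rfl]

lemma card_edgeFinset_cycleGraph : #(cycleGraph (k + 3)).edgeFinset = k + 3 := by
  rw [edgeFinset_cycleGraph, card_image_of_injective _ sym2_self_add_one_injective, card_univ,
    Fintype.card_fin]

lemma edgeSupport_edgeFinset_cycleGraph :
    edgeSupport (cycleGraph (k + 3)).edgeFinset = univ :=
  eq_univ_of_forall fun i ↦ mem_biUnion.2 ⟨s(i, i + 1), by simp [edgeFinset_cycleGraph], by simp⟩

lemma card_lt_card_edgeSupport_of_ssubset (hJ : J ⊂ (cycleGraph (k + 3)).edgeFinset)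
    (hne : J.Nonempty) : #J < #(edgeSupport J) := by
  rw [edgeFinset_cycleGraph] at hJ
  obtain ⟨I, -, rfl⟩ := subset_image_iff.1 hJ.subset
  have hsub : I ⊆ edgeSupport (I.image fun i ↦ s(i, i + 1)) := fun i hi ↦
    mem_biUnion.2 ⟨s(i, i + 1), mem_image_of_mem _ hi, by simp⟩
  have hsucc : ∀ i ∈ I, i + 1 ∈ edgeSupport (I.image fun i ↦ s(i, i + 1)) := fun i hi ↦
    mem_biUnion.2 ⟨s(i, i + 1), mem_image_of_mem _ hi, by simp⟩
  rw [card_image_of_injective _ sym2_self_add_one_injective]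
  refine lt_of_not_ge fun hcard ↦ hJ.ne ?_
  rw [eq_univ_of_forall_add_one_mem (image_nonempty.1 hne) fun i hi ↦
    eq_of_subset_of_card_le hsub hcard ▸ hsucc i hi]

lemma mul_le_pow_card_mul_pow_card_edgeSupport {p m K : ℝ} (hm : 1 ≤ m) (hK : 1 ≤ K)
    (hpm : K ≤ p * m) (hpow : m * K ≤ (p * m) ^ (k + 3))
    (hJ : J ⊆ (cycleGraph (k + 3)).edgeFinset) (hne : J.Nonempty) :
    m * K ≤ p ^ #J * m ^ #(edgeSupport J) := by
  have hp : 0 ≤ p := nonneg_of_mul_nonneg_left (by linarith) (by linarith : 0 < m)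
  rcases hJ.eq_or_ssubset with rfl | hJ
  · rwa [edgeSupport_edgeFinset_cycleGraph, card_edgeFinset_cycleGraph, card_univ,
      Fintype.card_fin, ← mul_pow]
  · calc m * K ≤ m * (p * m) ^ #J := by
          gcongr
          exact hpm.trans (le_self_pow₀ (hK.trans hpm) hne.card_ne_zero)
      _ = p ^ #J * m ^ (#J + 1) := by ring
      _ ≤ p ^ #J * m ^ #(edgeSupport J) := by
          gcongr
          exact card_lt_card_edgeSupport_of_ssubset hJ hne

lemma cyclesBetween_eq_card_transversalCopies {n : ℕ} (G : SimpleGraph (Fin n))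
    (V : Fin (k + 3) → Finset (Fin n)) :
    cyclesBetween G (k + 3) V = #(transversalCopies G (cycleGraph (k + 3)) V) := by
  have hone : (⟨1 % (k + 3), Nat.mod_lt 1 (Nat.succ_pos _)⟩ : Fin (k + 3)) = 1 := rfl
  rw [cyclesBetween, transversalCopies]
  congr 1
  ext v
  simp only [mem_filter, mem_univ, true_and, Fintype.mem_piFinset, cycleGraph_adj,
    sub_eq_iff_eq_add', hone]
  refine and_congr_right fun _ ↦ ⟨?_, fun h i ↦ h i (i + 1) (.inr rfl)⟩
  rintro h i j (rfl | rfl)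
  exacts [(h j).symm, h i]

theorem one_sub_mul_exp_le_erProb_cyclesBetween {n : ℕ} {p m K c : ℝ} (hp₀ : 0 ≤ p)
    (hp₁ : p ≤ 1) (hm : 1 ≤ m) (hK : 1 ≤ K) (hpm : K ≤ p * m)
    (hpow : m * K ≤ (p * m) ^ (k + 3)) (hc : c < 1) :
    1 - (2 ^ n) ^ (k + 3) * Real.exp (-((1 - c) ^ 2 * (m * K) / 2 ^ (k + 3 + 1))) ≤
      erProb n p fun G ↦ ∀ V : Fin (k + 3) → Finset (Fin n),
        (∀ i j, i ≠ j → Disjoint (V i) (V j)) → (∀ i, m ≤ #(V i)) →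
          c * p ^ (k + 3) * ∏ i, (#(V i) : ℝ) ≤ cyclesBetween G (k + 3) V := by
  have hp : 0 < p := hp₀.lt_of_ne' fun h ↦ by simp [h] at hpm; linarith
  have hprob := edgeProb_mem_Icc (α := Fin n) ⟨hp₀, hp₁⟩
  rw [erProb_eq_bernoulliProb]
  refine le_trans (by simp) (one_sub_card_mul_le_bernoulliProb_forall hprob
    (δ := Real.exp (-((1 - c) ^ 2 * (m * K) / 2 ^ (k + 3 + 1)))) fun V ↦ ?_)
  by_cases hV : (∀ i j, i ≠ j → Disjoint (V i) (V j)) ∧ ∀ i, m ≤ #(V i)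
  · have htail := bernoulliProb_card_transversalCopies_lt_le_exp (H := cycleGraph (k + 3))
      (fun i j ↦ hV.1 i j) hp hp₁ (by linarith) hV.2 (by positivity)
      (fun J ↦ mul_le_pow_card_mul_pow_card_edgeSupport hm hK hpm hpow) hc
    simp only [card_edgeFinset_cycleGraph, ← cyclesBetween_eq_card_transversalCopies] at htail
    refine (bernoulliProb_mono hprob fun S hS ↦ ?_).trans htail
    push Not at hS
    exact hS.2.2
  · rw [bernoulliProb_eq_zero fun S ↦ not_not.2 fun hdisj hcard ↦ absurd ⟨hdisj, hcard⟩ hV]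
    exact (Real.exp_pos _).le

end Cycles

section Threshold

variable {ℓ : ℕ} {a c C K p x : ℝ}

lemma rpow_sub_one_div_le_self (hx : 1 ≤ x) : x ^ (((ℓ : ℝ) - 1) / ℓ) ≤ x :=
  (Real.rpow_le_rpow_of_exponent_le hx
    (div_le_one_of_le₀ (sub_le_self _ zero_le_one) ℓ.cast_nonneg)).trans_eq (Real.rpow_one x)

lemma rpow_sub_one_div_pow (hx : 0 ≤ x) (hℓ : ℓ ≠ 0) :
    (x ^ (((ℓ : ℝ) - 1) / ℓ)) ^ ℓ = x ^ (ℓ - 1) := by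
  rw [← Real.rpow_mul_natCast hx, div_mul_cancel₀ _ (Nat.cast_ne_zero.2 hℓ), ← Real.rpow_natCast,
    Nat.cast_pred (Nat.pos_of_ne_zero hℓ)]

lemma le_mul_mul_of_le_mul_rpow (ha : 0 ≤ a) (hp : 0 ≤ p) (hx : 1 ≤ x) (hKC : K ≤ C * a)
    (hC : C ≤ p * x ^ (((ℓ : ℝ) - 1) / ℓ)) : K ≤ p * (a * x) :=
  calc K ≤ C * a := hKC
    _ ≤ p * x * a := mul_le_mul_of_nonneg_right
        (hC.trans (mul_le_mul_of_nonneg_left (rpow_sub_one_div_le_self hx) hp)) ha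
    _ = p * (a * x) := by ring

lemma mul_mul_le_pow_of_le_mul_rpow (hℓ : ℓ ≠ 0) (ha : 0 ≤ a) (hx : 0 ≤ x) (hC₁ : 1 ≤ C)
    (hKC : K ≤ C * a ^ (ℓ - 1)) (hC : C ≤ p * x ^ (((ℓ : ℝ) - 1) / ℓ)) :
    a * x * K ≤ (p * (a * x)) ^ ℓ := by
  have hCpow : C ≤ p ^ ℓ * x ^ (ℓ - 1) := by
    rw [← rpow_sub_one_div_pow hx hℓ, ← mul_pow]
    exact hC.trans (le_self_pow₀ (hC₁.trans hC) hℓ)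
  calc a * x * K ≤ a * x * (p ^ ℓ * x ^ (ℓ - 1) * a ^ (ℓ - 1)) :=
        mul_le_mul_of_nonneg_left
          (hKC.trans (mul_le_mul_of_nonneg_right hCpow (pow_nonneg ha _))) (mul_nonneg ha hx)
    _ = p ^ ℓ * (a * x * (a * x) ^ (ℓ - 1)) := by ring
    _ = (p * (a * x)) ^ ℓ := by rw [mul_pow_sub_one hℓ, ← mul_pow]

lemma two_pow_pow_mul_exp_neg_le_exp_neg (n : ℕ) (hx : ℓ + 1 ≤ x) :
    ((2 : ℝ) ^ n) ^ ℓ * Real.exp (-(x * n)) ≤ Real.exp (-n) := by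
  have htwo : (2 : ℝ) ≤ Real.exp 1 := by linarith [Real.add_one_le_exp 1]
  calc ((2 : ℝ) ^ n) ^ ℓ * Real.exp (-(x * n))
      ≤ (Real.exp 1 ^ n) ^ ℓ * Real.exp (-((ℓ + 1) * n)) := by gcongr
    _ = Real.exp (-n) := by
        rw [← pow_mul, ← Real.exp_nat_mul, ← Real.exp_add]
        push_cast
        ring_nf

lemma one_sub_exp_neg_le_erProb_cyclesBetween {k n : ℕ} (ha : 0 ≤ a) (hp₀ : 0 ≤ p) (hp₁ : p ≤ 1)
    (hc : c < 1) (hn : 1 ≤ n) (han : 1 ≤ a * n) (hK₁ : 1 ≤ K)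
    (hK : ((k + 3 : ℕ) : ℝ) + 1 ≤ (1 - c) ^ 2 * a / 2 ^ (k + 3 + 1) * K) (hC₁ : 1 ≤ C)
    (hKC : K ≤ C * a) (hKCpow : K ≤ C * a ^ (k + 3 - 1))
    (hC : C ≤ p * n ^ ((((k + 3 : ℕ) : ℝ) - 1) / (k + 3 : ℕ))) :
    1 - Real.exp (-n) ≤ erProb n p fun G ↦ ∀ V : Fin (k + 3) → Finset (Fin n),
      (∀ i j, i ≠ j → Disjoint (V i) (V j)) → (∀ i, a * n ≤ #(V i)) →
        c * p ^ (k + 3) * ∏ i, (#(V i) : ℝ) ≤ cyclesBetween G (k + 3) V := by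
  have hexponent : (1 - c) ^ 2 * (a * n * K) / 2 ^ (k + 3 + 1) =
      (1 - c) ^ 2 * a / 2 ^ (k + 3 + 1) * K * n := by ring
  refine le_trans (sub_le_sub_left ?_ 1) (one_sub_mul_exp_le_erProb_cyclesBetween hp₀ hp₁ han hK₁
    (le_mul_mul_of_le_mul_rpow ha hp₀ (Nat.one_le_cast.2 hn) hKC hC)
    (mul_mul_le_pow_of_le_mul_rpow (by simp) ha n.cast_nonneg hC₁ hKCpow hC) hc)
  rw [hexponent]
  exact two_pow_pow_mul_exp_neg_le_exp_neg n hK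

end Threshold

theorem aas_many_cycles_between_sets_general (ℓ : ℕ) (hℓ : 3 ≤ ℓ) (ε : ℝ) (hε : 0 < ε) (c : ℝ)
    (hc : c < 1) :
    ∃ C : ℝ, ∀ p : ℕ → ℝ, (∀ n, 0 ≤ p n) → (∀ n, p n ≤ 1) →
      (∀ᶠ n : ℕ in atTop, C ≤ p n * (n : ℝ) ^ (((ℓ : ℝ) - 1) / (ℓ : ℝ))) →
      Tendsto (fun n : ℕ ↦ erProb n (p n) fun G ↦ ∀ V : Fin ℓ → Finset (Fin n),
        (∀ i j, i ≠ j → Disjoint (V i) (V j)) → (∀ i, ε * n / ℓ ≤ (#(V i) : ℝ)) →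
          c * p n ^ ℓ * ∏ i, (#(V i) : ℝ) ≤ cyclesBetween G ℓ V) atTop (nhds 1) := by
  obtain ⟨k, rfl⟩ := Nat.exists_eq_add_of_le' hℓ
  obtain ⟨a, ha, hεa⟩ : ∃ a > 0, ∀ n : ℕ, ε * n / (k + 3 : ℕ) = a * n :=
    ⟨ε / (k + 3 : ℕ), by positivity, fun n ↦ by ring⟩
  have hb : 0 < (1 - c) ^ 2 * a / 2 ^ (k + 3 + 1) :=
    div_pos (mul_pos (pow_pos (sub_pos.2 hc) 2) ha) (by positivity)
  obtain ⟨K, hK₁, hK⟩ := ((eventually_ge_atTop 1).and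
    ((tendsto_id.const_mul_atTop hb).eventually_ge_atTop (((k + 3 : ℕ) : ℝ) + 1))).exists
  obtain ⟨C, hC₁, hKC, hKCpow⟩ := ((eventually_ge_atTop 1).and
    (((tendsto_id.atTop_mul_const ha).eventually_ge_atTop K).and
      ((tendsto_id.atTop_mul_const (pow_pos ha (k + 3 - 1))).eventually_ge_atTop K))).exists
  refine ⟨C, fun p hp₀ hp₁ hC ↦ ?_⟩
  have hlower : Tendsto (fun n : ℕ ↦ 1 - Real.exp (-n)) atTop (nhds 1) := by
    simpa using (Real.tendsto_exp_neg_atTop_nhds_zero.comp tendsto_natCast_atTop_atTop).const_sub 1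
  refine tendsto_of_tendsto_of_tendsto_of_le_of_le' hlower tendsto_const_nhds ?_
    (.of_forall fun n ↦ ?_)
  · have han : ∀ᶠ n : ℕ in atTop, 1 ≤ a * n :=
      (tendsto_natCast_atTop_atTop.const_mul_atTop ha).eventually_ge_atTop 1
    filter_upwards [hC, han, eventually_ge_atTop 1] with n hCn han hn
    simp only [hεa]
    exact one_sub_exp_neg_le_erProb_cyclesBetween ha.le (hp₀ n) (hp₁ n) hc hn han hK₁ hK
      hC₁ hKC hKCpow hCn
  · rw [erProb_eq_bernoulliProb]
    exact bernoulliProb_le_one (edgeProb_mem_Icc ⟨hp₀ n, hp₁ n⟩) _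

/-- For an integer `ℓ ≥ 3`, `ε > 0`, and `p = ω(n^{-(ℓ-1)/ℓ})`, a.a.s. in `G(n,p)`:
for every choice of pairwise disjoint vertex sets `V₁, …, V_ℓ` each of size at least
`εn/ℓ`, the number of cycles `v₁ ⋯ v_ℓ` with `v_i ∈ V_i` is at least
`(1/2) p^ℓ ∏ |V_i|`. -/
theorem aas_many_cycles_between_sets
    (ℓ : ℕ) (hℓ : 3 ≤ ℓ) (ε : ℝ) (hε : 0 < ε) (p : ℕ → ℝ)
    (hp0 : ∀ n, 0 ≤ p n) (hp1 : ∀ n, p n ≤ 1)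
    (hp : Tendsto (fun n : ℕ => p n * (n : ℝ) ^ (((ℓ : ℝ) - 1) / (ℓ : ℝ))) atTop atTop) :
    Tendsto (fun n : ℕ => erProb n (p n) (fun G =>
        ∀ V : Fin ℓ → Finset (Fin n),
          (∀ i j, i ≠ j → Disjoint (V i) (V j)) →
          (∀ i, ε * n / ℓ ≤ ((V i).card : ℝ)) →
          1 / 2 * (p n) ^ ℓ * ∏ i, ((V i).card : ℝ) ≤ (cyclesBetween G ℓ V : ℝ)))
      atTop (nhds 1) := by
  obtain ⟨C, hC⟩ := aas_many_cycles_between_sets_general ℓ hℓ ε hε (1 / 2) (by norm_num)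
  exact hC p hp0 hp1 (hp.eventually_ge_atTop C)
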